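/- Let V, H, W, Z be real Hilbert spaces, let ι : V → H be an injective compact continuous linear map, and let A : V → W and B : V → Z be continuous linear operators such that Ker(A) ∩ Ker(B) = {0} and such that there exists a constant C > 0 with ‖v‖_V ≤ C(‖ιv‖_H + ‖Av‖_W) for all v ∈ V. Then there exists a constant M > 0 such that ‖ιv‖_H ≤ M(‖Bv‖_Z + ‖Av‖_W) for all v ∈ V. -/

import Mathlib

/-!
Put `T v = (B v, A v)`, an injective operator such that `v ↦ (ι v, T v)` is bounded below. Since
`V` is complete, the latter map is closed; and since `ι` sends bounded sets into compact sets,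
projecting away its first coordinate shows that `T` maps closed bounded sets to closed sets.
In particular the image under `T` of a spherical shell is closed. It does not contain `0` by
injectivity, so it stays at a positive distance from `0`, and by homogeneity `T` is bounded below.
-/

open Metric Set

theorem isClosed_image_of_isClosedMap_prodMk {X Y Z : Type*}
    [TopologicalSpace X] [TopologicalSpace Y] [TopologicalSpace Z] {f : X → Y} {g : X → Z}
    (hfg : IsClosedMap fun x ↦ (f x, g x)) {S : Set X} (hS : IsClosed S)
    {K : Set Y} (hK : IsCompact K) (hSK : MapsTo f S K) : IsClosed (g '' S) := by
  have : CompactSpace K := isCompact_iff_compactSpace.mp hK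
  let P : Set (K × Z) := {p | ((p.1 : Y), p.2) ∈ (fun x ↦ (f x, g x)) '' S}
  have hP : IsClosed P := (hfg S hS).preimage (by fun_prop)
  have hPS : Prod.snd '' P = g '' S := by
    ext z
    constructor
    · rintro ⟨p, ⟨x, hx, hxp⟩, rfl⟩
      exact ⟨x, hx, congrArg Prod.snd hxp⟩
    · rintro ⟨x, hx, rfl⟩
      exact ⟨(⟨f x, hSK hx⟩, g x), ⟨x, hx, rfl⟩, rfl⟩
  exact hPS ▸ isClosedMap_snd_of_compactSpace P hP

section BoundedBelow

variable {𝕜 V H W : Type*} [NontriviallyNormedField 𝕜]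

theorem exists_antilipschitzWith_of_zero_notMem_closure_image_shell
    [SeminormedAddCommGroup V] [NormedSpace 𝕜 V] [SeminormedAddCommGroup W] [NormedSpace 𝕜 W]
    (f : V →ₗ[𝕜] W) {c : 𝕜} (hc : 1 < ‖c‖)
    (hf : 0 ∉ closure (f '' (closedBall 0 1 \ ball 0 ‖c‖⁻¹))) :
    ∃ K, AntilipschitzWith K f := by
  obtain ⟨ε, hε, hshell⟩ : ∃ ε > 0, ∀ x, ‖c‖⁻¹ ≤ ‖x‖ → ‖x‖ ≤ 1 → ε ≤ ‖f x‖ := by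
    simpa [Metric.mem_closure_iff, and_comm] using hf
  refine antilipschitzWith_iff_exists_mul_le_norm.mpr ⟨ε, hε, fun x ↦ ?_⟩
  obtain hx | hx := eq_or_ne ‖x‖ 0
  · simp [hx]
  obtain ⟨d, hd, hd_le, hd_ge, -⟩ := rescale_to_shell_semi_normed hc one_pos hx
  have hdx : ε * ‖d • x‖ ≤ ‖f (d • x)‖ :=
    (mul_le_of_le_one_right hε.le hd_le.le).trans (hshell _ (by simpa using hd_ge) hd_le.le)
  rw [map_smul, norm_smul, norm_smul, mul_left_comm] at hdx
  exact le_of_mul_le_mul_left hdx (norm_pos_iff.mpr hd)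

variable [NormedAddCommGroup V] [NormedSpace 𝕜 V] [CompleteSpace V]
  [NormedAddCommGroup H] [NormedSpace 𝕜 H] [NormedAddCommGroup W] [NormedSpace 𝕜 W]
  {ι : V →L[𝕜] H} {T : V →L[𝕜] W} {C : NNReal}

theorem isClosed_image_of_antilipschitzWith_prod_of_isCompactOperator
    (hι : IsCompactOperator ι) (hιT : AntilipschitzWith C (ι.prod T))
    {S : Set V} (hS : IsClosed S) (hS_bdd : Bornology.IsBounded S) : IsClosed (T '' S) := by
  obtain ⟨K, hK, hSK⟩ := IsCompactOperator.image_subset_compact_of_bounded (f := ι.toLinearMap)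
    hι hS_bdd
  exact isClosed_image_of_isClosedMap_prodMk
    (hιT.isClosedEmbedding (ι.prod T).uniformContinuous).isClosedMap hS hK (image_subset_iff.mp hSK)

theorem exists_antilipschitzWith_of_injective_of_isCompactOperator
    (hι : IsCompactOperator ι) (hιT : AntilipschitzWith C (ι.prod T))
    (hT : Function.Injective T) : ∃ K, AntilipschitzWith K T := by
  obtain ⟨c, hc⟩ := NormedField.exists_one_lt_norm 𝕜
  let shell : Set V := closedBall 0 1 \ ball 0 ‖c‖⁻¹
  have hclosed : IsClosed (T '' shell) :=
    isClosed_image_of_antilipschitzWith_prod_of_isCompactOperator hι hιT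
      (isClosed_closedBall.sdiff isOpen_ball) (isBounded_closedBall.subset sdiff_subset)
  have hzero : 0 ∉ T '' shell := by
    rintro ⟨x, ⟨-, hx⟩, hTx⟩
    obtain rfl : x = 0 := (map_eq_zero_iff T hT).mp hTx
    exact hx (mem_ball_self (by positivity))
  exact exists_antilipschitzWith_of_zero_notMem_closure_image_shell T.toLinearMap hc
    fun h ↦ hzero (hclosed.closure_subset h)

end BoundedBelow

theorem abstract_poincare_inequality_general
    {𝕜 V H W Z : Type*} [NontriviallyNormedField 𝕜]
    [NormedAddCommGroup V] [NormedSpace 𝕜 V] [CompleteSpace V]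
    [NormedAddCommGroup H] [NormedSpace 𝕜 H]
    [NormedAddCommGroup W] [NormedSpace 𝕜 W]
    [NormedAddCommGroup Z] [NormedSpace 𝕜 Z]
    (ι : V →L[𝕜] H) (A : V →L[𝕜] W) (B : V →L[𝕜] Z)
    (hι_cpt : IsCompactOperator ι)
    (hker : ∀ v : V, A v = 0 → B v = 0 → v = 0)
    (hcoer : ∃ C : ℝ, 0 < C ∧ ∀ v : V, ‖v‖ ≤ C * (‖ι v‖ + ‖A v‖)) :
    ∃ M : ℝ, 0 < M ∧ ∀ v : V, ‖ι v‖ ≤ M * (‖B v‖ + ‖A v‖) := by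
  obtain ⟨C, hC, hcoer⟩ := hcoer
  have hinj : Function.Injective (B.prod A) :=
    (injective_iff_map_eq_zero _).mpr fun v hv ↦
      hker v (congrArg Prod.snd hv) (congrArg Prod.fst hv)
  have hbelow : AntilipschitzWith (C * 2).toNNReal (ι.prod (B.prod A)) := by
    refine (ι.prod (B.prod A)).antilipschitz_of_bound fun v ↦ ?_
    have hι_le : ‖ι v‖ ≤ ‖ι.prod (B.prod A) v‖ := norm_fst_le (ι v, B v, A v)
    have hA_le : ‖A v‖ ≤ ‖ι.prod (B.prod A) v‖ :=
      (norm_snd_le (B v, A v)).trans (norm_snd_le (ι v, B v, A v))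
    rw [Real.coe_toNNReal _ (by positivity), mul_assoc, two_mul]
    exact (hcoer v).trans (by gcongr)
  obtain ⟨K, hK⟩ := exists_antilipschitzWith_of_injective_of_isCompactOperator hι_cpt hbelow hinj
  refine ⟨‖ι‖ * K + 1, by positivity, fun v ↦ ?_⟩
  calc ‖ι v‖ ≤ ‖ι‖ * ‖v‖ := ι.le_opNorm v
    _ ≤ ‖ι‖ * (K * ‖(B v, A v)‖) := by
      gcongr
      exact hK.le_mul_norm (map_zero _) v
    _ ≤ ‖ι‖ * (K * (‖B v‖ + ‖A v‖)) := by
      gcongr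
      exact max_le_add_of_nonneg (norm_nonneg _) (norm_nonneg _)
    _ ≤ (‖ι‖ * K + 1) * (‖B v‖ + ‖A v‖) := by
      rw [← mul_assoc]
      gcongr
      exact le_add_of_nonneg_right zero_le_one

/-- Abstract Poincaré-type inequality: given Hilbert spaces `V, H, W, Z`, an injective
compact continuous linear embedding `ι : V → H`, and continuous linear operators
`A : V → W`, `B : V → Z` with trivial joint kernel and satisfying the coercivity
estimate `‖v‖ ≤ C (‖ι v‖ + ‖A v‖)`, there is `M > 0` with
`‖ι v‖ ≤ M (‖B v‖ + ‖A v‖)` for all `v`. -/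
theorem abstract_poincare_inequality
    {V H W Z : Type*}
    [NormedAddCommGroup V] [InnerProductSpace ℝ V] [CompleteSpace V]
    [NormedAddCommGroup H] [InnerProductSpace ℝ H] [CompleteSpace H]
    [NormedAddCommGroup W] [InnerProductSpace ℝ W] [CompleteSpace W]
    [NormedAddCommGroup Z] [InnerProductSpace ℝ Z] [CompleteSpace Z]
    (ι : V →L[ℝ] H) (A : V →L[ℝ] W) (B : V →L[ℝ] Z)
    (hι_inj : Function.Injective (⇑ι))
    (hι_cpt : IsCompactOperator (⇑ι))
    (hker : ∀ v : V, A v = 0 → B v = 0 → v = 0)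
    (hcoer : ∃ C : ℝ, 0 < C ∧ ∀ v : V, ‖v‖ ≤ C * (‖ι v‖ + ‖A v‖)) :
    ∃ M : ℝ, 0 < M ∧ ∀ v : V, ‖ι v‖ ≤ M * (‖B v‖ + ‖A v‖) := by
  exact abstract_poincare_inequality_general ι A B hι_cpt hker hcoer
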